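/- arXiv:2406.04530 — 3 statements merged into one kernel-verified Lean document; each statement's English description precedes it below -/
import Mathlib

section
/- Let 0 < ε* and C > 0, let A ∈ ℝ^{n×z} have full column rank z, and let κ(A) = ‖A†‖‖A‖. Suppose P̄ ∈ ℝ^{n×z} is such that there exist matrices Ẽ ∈ ℝ^{z×n} and F̃ ∈ ℝ^{n×z} with P̄ + F̃ = (Aᵀ + Ẽ)†, ‖Ẽ‖ ≤ Cε*‖A‖, and ‖F̃‖ ≤ Cε*‖P̄‖, where (Aᵀ + Ẽ)† denotes the Moore–Penrose pseudoinverse of Aᵀ + Ẽ. If Cε*κ(A) < 1, then ‖(Aᵀ)† − P̄‖ ≤ (C‖A†‖ε* / (1 − Cκ(A)ε*)) · (√2·κ(A) + 1/(1 − Cε*)). -/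
/-!
Write `B = Aᵀ`, `P = (Aᵀ)†`, `M = B + E`, `Q = M†`, and `η = Cε*κ(A) < 1`. Full column rank gives
`B P = 1`, and `‖E P‖ ≤ η < 1` makes `M P = 1 + E P` invertible, so also `M Q = 1`.

* `B P = 1` gives `Q = (Q M) P - Q (E P)` with `Q M` an orthogonal projection, so
  `‖Q‖ ≤ ‖P‖ / (1 - η)` (`norm_pinv_le`).
* `Q - P` splits into the orthogonal parts `-P E Q` (range of `P`) and `(1 - P B) Eᵀ Qᵀ Q`
  (kernel of `B`), whence `‖Q - P‖² ≤ ‖E‖² ‖Q‖² (‖P‖² + ‖Q‖²)` (`norm_sub_sq_le`). The roles of `P`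
  and `Q` can be exchanged; choosing the order in which the outer factor is the smaller norm yields
  Wedin's bound `‖Q - P‖ ≤ √2 ‖P‖ ‖Q‖ ‖E‖` (`wedin`).
* `‖P̄‖ ≤ ‖Q‖ / (1 - Cε*)` by the triangle inequality, which bounds `‖F‖`; here `Cε* < 1` because
  `κ(A) ≥ 1` as soon as `z > 0`. For `z = 0` both sides vanish.
-/

open scoped Matrix
noncomputable section

/-- `N` is the Moore–Penrose pseudoinverse of `M` (the four Penrose equations). -/
def IsMPInv {m n : ℕ} (M : Matrix (Fin m) (Fin n) ℝ) (N : Matrix (Fin n) (Fin m) ℝ) : Prop :=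
  M * N * M = M ∧ N * M * N = N ∧ (M * N)ᵀ = M * N ∧ (N * M)ᵀ = N * M

/-- The spectral (ℓ² operator) norm of a matrix. -/
noncomputable def spec {m n : ℕ} (A : Matrix (Fin m) (Fin n) ℝ) : ℝ :=
  ‖LinearMap.toContinuousLinearMap (Matrix.toEuclideanLin A)‖

open scoped Matrix.Norms.L2Operator

lemma spec_eq_norm {m n : ℕ} (A : Matrix (Fin m) (Fin n) ℝ) : spec A = ‖A‖ := rfl

lemma norm_transpose_l2 {m n : ℕ} (A : Matrix (Fin m) (Fin n) ℝ) : ‖Aᵀ‖ = ‖A‖ := by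
  rw [← Matrix.conjTranspose_eq_transpose_of_trivial, Matrix.l2_opNorm_conjTranspose]

lemma norm_transpose_mul_self_l2 {m n : ℕ} (A : Matrix (Fin m) (Fin n) ℝ) :
    ‖Aᵀ * A‖ = ‖A‖ * ‖A‖ := by
  rw [← Matrix.conjTranspose_eq_transpose_of_trivial, Matrix.l2_opNorm_conjTranspose_mul_self]

lemma norm_proj_le_one {n : ℕ} (R : Matrix (Fin n) (Fin n) ℝ) (hs : Rᵀ = R) (hi : R * R = R) :
    ‖R‖ ≤ 1 := by
  have h := norm_transpose_mul_self_l2 R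
  rw [hs, hi] at h
  nlinarith [norm_nonneg R]

/-- Pythagoras for the spectral norm: summands with orthogonal ranges. -/
lemma norm_add_sq_le_of_orthogonal {m n : ℕ} (U V : Matrix (Fin m) (Fin n) ℝ) (h : Uᵀ * V = 0) :
    ‖U + V‖ ^ 2 ≤ ‖U‖ ^ 2 + ‖V‖ ^ 2 := by
  have h' : Vᵀ * U = 0 := by
    have := congrArg Matrix.transpose h
    simpa [Matrix.transpose_mul] using this
  have e : (U + V)ᵀ * (U + V) = Uᵀ * U + Vᵀ * V := by
    rw [Matrix.transpose_add, Matrix.add_mul, Matrix.mul_add, Matrix.mul_add, h, h']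
    simp
  have := norm_add_le (Uᵀ * U) (Vᵀ * V)
  rw [← e, norm_transpose_mul_self_l2, norm_transpose_mul_self_l2,
    norm_transpose_mul_self_l2] at this
  nlinarith

lemma norm_sub_sq_le {n z : ℕ} (B M : Matrix (Fin z) (Fin n) ℝ) (P Q : Matrix (Fin n) (Fin z) ℝ)
    (hBP : B * P = 1) (hMQ : M * Q = 1) (hP : (P * B)ᵀ = P * B) (hQ : (Q * M)ᵀ = Q * M) :
    ‖Q - P‖ ^ 2 ≤ (‖M - B‖ * ‖Q‖) ^ 2 * (‖P‖ ^ 2 + ‖Q‖ ^ 2) := by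
  have hR : (1 - P * B) * P = 0 := by
    rw [Matrix.sub_mul, Matrix.mul_assoc, hBP]; simp
  have hRt : (1 - P * B)ᵀ = 1 - P * B := by
    rw [Matrix.transpose_sub, hP, Matrix.transpose_one]
  have hR1 : ‖1 - P * B‖ ≤ 1 := by
    refine norm_proj_le_one _ hRt ?_
    rw [Matrix.mul_sub, ← Matrix.mul_assoc, hR]; simp
  have hBt : (1 - P * B) * Bᵀ = 0 := by
    have : B * (1 - P * B) = 0 := by
      rw [Matrix.mul_sub, ← Matrix.mul_assoc, hBP]; simp
    have := congrArg Matrix.transpose this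
    simpa only [Matrix.transpose_mul, hRt, Matrix.transpose_zero] using this
  have hQe : Q = Mᵀ * (Qᵀ * Q) := by
    rw [← Matrix.mul_assoc, ← Matrix.transpose_mul, hQ, Matrix.mul_assoc, hMQ, Matrix.mul_one]
  have hU : P * B * Q - P = -(P * ((M - B) * Q)) := by
    rw [Matrix.sub_mul, hMQ, Matrix.mul_sub, Matrix.mul_assoc]; simp
  have hV : (1 - P * B) * Q = (1 - P * B) * ((M - B)ᵀ * (Qᵀ * Q)) := by
    rw [Matrix.transpose_sub, Matrix.sub_mul Mᵀ, ← hQe, Matrix.mul_sub _ Q, ← Matrix.mul_assoc _ Bᵀ,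
      hBt]
    simp
  have hsplit : Q - P = -(P * ((M - B) * Q)) + (1 - P * B) * ((M - B)ᵀ * (Qᵀ * Q)) := by
    rw [← hU, ← hV, Matrix.sub_mul, Matrix.one_mul]; abel
  have horth : (-(P * ((M - B) * Q)))ᵀ * ((1 - P * B) * ((M - B)ᵀ * (Qᵀ * Q))) = 0 := by
    have : Pᵀ * (1 - P * B) = 0 := by
      have := congrArg Matrix.transpose hR
      simpa only [Matrix.transpose_mul, hRt, Matrix.transpose_zero] using this
    rw [Matrix.transpose_neg, Matrix.transpose_mul, Matrix.neg_mul, Matrix.mul_assoc,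
      ← Matrix.mul_assoc Pᵀ, this]
    simp
  have hp := norm_add_sq_le_of_orthogonal _ _ horth
  rw [← hsplit, norm_neg] at hp
  have h1 : ‖P * ((M - B) * Q)‖ ≤ ‖P‖ * (‖M - B‖ * ‖Q‖) :=
    (Matrix.l2_opNorm_mul _ _).trans
      (mul_le_mul_of_nonneg_left (Matrix.l2_opNorm_mul _ _) (norm_nonneg _))
  have h2 : ‖(1 - P * B) * ((M - B)ᵀ * (Qᵀ * Q))‖ ≤ ‖M - B‖ * (‖Q‖ * ‖Q‖) := by
    have h3 := Matrix.l2_opNorm_mul (M - B)ᵀ (Qᵀ * Q)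
    rw [norm_transpose_l2, norm_transpose_mul_self_l2] at h3
    refine (Matrix.l2_opNorm_mul _ _).trans ?_
    exact (mul_le_of_le_one_left (norm_nonneg _) hR1).trans h3
  calc ‖Q - P‖ ^ 2 ≤ _ := hp
    _ ≤ (‖P‖ * (‖M - B‖ * ‖Q‖)) ^ 2 + (‖M - B‖ * (‖Q‖ * ‖Q‖)) ^ 2 := by gcongr
    _ = _ := by ring

/-- Wedin's perturbation bound for pseudoinverses of two matrices of full row rank. -/
lemma wedin {n z : ℕ} (B M : Matrix (Fin z) (Fin n) ℝ) (P Q : Matrix (Fin n) (Fin z) ℝ)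
    (hBP : B * P = 1) (hMQ : M * Q = 1) (hP : (P * B)ᵀ = P * B) (hQ : (Q * M)ᵀ = Q * M) :
    ‖P - Q‖ ≤ √2 * (‖P‖ * ‖Q‖ * ‖M - B‖) := by
  refine abs_le_of_sq_le_sq' ?_ (by positivity) |>.2
  rw [mul_pow, Real.sq_sqrt (by norm_num)]
  rcases le_total ‖P‖ ‖Q‖ with h | h
  · have h1 := norm_sub_sq_le M B Q P hMQ hBP hQ hP
    rw [norm_sub_rev B M] at h1
    have h2 : ‖P‖ ^ 2 ≤ ‖Q‖ ^ 2 := by gcongr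
    calc _ ≤ _ := h1
      _ ≤ (‖M - B‖ * ‖P‖) ^ 2 * (‖Q‖ ^ 2 + ‖Q‖ ^ 2) := by gcongr
      _ = _ := by ring
  · have h1 := norm_sub_sq_le B M P Q hBP hMQ hP hQ
    have h2 : ‖Q‖ ^ 2 ≤ ‖P‖ ^ 2 := by gcongr
    rw [norm_sub_rev P Q]
    calc _ ≤ _ := h1
      _ ≤ (‖M - B‖ * ‖Q‖) ^ 2 * (‖P‖ ^ 2 + ‖P‖ ^ 2) := by gcongr
      _ = _ := by ring

lemma norm_pinv_le {n z : ℕ} (B M : Matrix (Fin z) (Fin n) ℝ) (P Q : Matrix (Fin n) (Fin z) ℝ)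
    (hBP : B * P = 1) (hMQ : M * Q = 1) (hQ : (Q * M)ᵀ = Q * M) :
    ‖Q‖ ≤ ‖P‖ + ‖M - B‖ * ‖P‖ * ‖Q‖ := by
  have e : Q = (Q * M) * P - Q * ((M - B) * P) := by
    rw [Matrix.sub_mul, hBP, Matrix.mul_sub, Matrix.mul_assoc]; simp
  have h1 : ‖Q * M‖ ≤ 1 := by
    refine norm_proj_le_one _ hQ ?_
    rw [Matrix.mul_assoc, ← Matrix.mul_assoc M, hMQ, Matrix.one_mul]
  calc ‖Q‖ = ‖(Q * M) * P - Q * ((M - B) * P)‖ := by rw [← e]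
    _ ≤ ‖(Q * M) * P‖ + ‖Q * ((M - B) * P)‖ := norm_sub_le _ _
    _ ≤ ‖Q * M‖ * ‖P‖ + ‖Q‖ * (‖M - B‖ * ‖P‖) := by
        refine add_le_add (Matrix.l2_opNorm_mul _ _) ((Matrix.l2_opNorm_mul _ _).trans ?_)
        exact mul_le_mul_of_nonneg_left (Matrix.l2_opNorm_mul _ _) (norm_nonneg _)
    _ ≤ 1 * ‖P‖ + ‖Q‖ * (‖M - B‖ * ‖P‖) := by gcongr
    _ = _ := by ring

/-- A perturbation `M` of `B` with `‖M - B‖ ‖P‖ < 1` still has full row rank, so any `Q` with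
`M Q M = M` is a right inverse of `M`. -/
lemma mul_pinv_eq_one {n z : ℕ} (B M : Matrix (Fin z) (Fin n) ℝ) (P Q : Matrix (Fin n) (Fin z) ℝ)
    (hBP : B * P = 1) (hMQM : M * Q * M = M) (h : ‖M - B‖ * ‖P‖ < 1) : M * Q = 1 := by
  have hlt : ‖(B - M) * P‖ < 1 := by
    refine (Matrix.l2_opNorm_mul _ _).trans_lt ?_
    rwa [norm_sub_rev]
  have hu : IsUnit (1 - (B - M) * P) := isUnit_one_sub_of_norm_lt_one hlt
  have hMP : 1 - (B - M) * P = M * P := by rw [Matrix.sub_mul, hBP]; abel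
  rw [hMP] at hu
  refine hu.mul_right_cancel ?_
  rw [← Matrix.mul_assoc, hMQM, Matrix.one_mul]

lemma pinv_mul_eq_one {n z : ℕ} (A : Matrix (Fin n) (Fin z) ℝ) (hrank : A.rank = z)
    (D : Matrix (Fin z) (Fin n) ℝ) (h : A * D * A = A) : D * A = 1 := by
  have hinj : Function.Injective A.mulVec := by
    have h1 := LinearMap.finrank_range_add_finrank_ker A.mulVecLin
    have h2 : Module.finrank ℝ (LinearMap.range A.mulVecLin) = z := hrank
    rw [h2, Module.finrank_fin_fun] at h1
    have h3 : LinearMap.ker A.mulVecLin = ⊥ := Submodule.finrank_eq_zero.1 (by omega)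
    exact LinearMap.ker_eq_bot.1 h3
  refine Matrix.ext_of_mulVec_single fun i => hinj ?_
  rw [Matrix.mulVec_mulVec, ← Matrix.mul_assoc, h, Matrix.one_mulVec]

/-- **Floating point error of a mixed forward-backward stable pseudoinverse computation.**
If `A` has full column rank, `P̄ + F̃ = (Aᵀ + Ẽ)†` with `‖Ẽ‖ ≤ Cε*‖A‖`, `‖F̃‖ ≤ Cε*‖P̄‖`,
and `Cε*κ(A) < 1` where `κ(A) = ‖A†‖‖A‖`, then
`‖(Aᵀ)† − P̄‖ ≤ (C‖A†‖ε*/(1 − Cκ(A)ε*))·(√2·κ(A) + 1/(1 − Cε*))`. -/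
theorem pseudoinverse_computation_error {n z : ℕ} (εs C : ℝ) (hεs : 0 < εs) (hC : 0 < C)
    (A : Matrix (Fin n) (Fin z) ℝ) (hrank : A.rank = z)
    (Adag : Matrix (Fin z) (Fin n) ℝ) (hAdag : IsMPInv A Adag)
    (κ : ℝ) (hκ : κ = spec Adag * spec A)
    (Pbar : Matrix (Fin n) (Fin z) ℝ)
    (Et : Matrix (Fin z) (Fin n) ℝ) (Ft : Matrix (Fin n) (Fin z) ℝ)
    (Q : Matrix (Fin n) (Fin z) ℝ) (hQ : IsMPInv (Aᵀ + Et) Q)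
    (hPbar : Pbar + Ft = Q)
    (hEt : spec Et ≤ C * εs * spec A) (hFt : spec Ft ≤ C * εs * spec Pbar)
    (hcond : C * εs * κ < 1) :
    spec (Adagᵀ - Pbar)
      ≤ C * spec Adag * εs / (1 - C * κ * εs) * (Real.sqrt 2 * κ + 1 / (1 - C * εs)) := by
  simp only [spec_eq_norm] at *
  rcases Nat.eq_zero_or_pos z with rfl | hz
  · have h1 : Adagᵀ - Pbar = 0 := Subsingleton.elim _ _
    have h2 : Adag = 0 := Subsingleton.elim _ _
    rw [h1, h2]
    simp
  obtain ⟨hA1, -, hA3, -⟩ := hAdag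
  obtain ⟨hQ1, -, -, hQ4⟩ := hQ
  have hDA : Adag * A = 1 := pinv_mul_eq_one A hrank Adag hA1
  have hBP : Aᵀ * Adagᵀ = 1 := by rw [← Matrix.transpose_mul, hDA, Matrix.transpose_one]
  have hP : (Adagᵀ * Aᵀ)ᵀ = Adagᵀ * Aᵀ := by
    rw [← Matrix.transpose_mul, hA3]
    exact hA3
  have hE : Aᵀ + Et - Aᵀ = Et := by abel
  have hEP : ‖Et‖ * ‖Adag‖ ≤ C * εs * κ := by
    rw [hκ]
    calc ‖Et‖ * ‖Adag‖ ≤ C * εs * ‖A‖ * ‖Adag‖ := by gcongr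
      _ = _ := by ring
  have hMQ : (Aᵀ + Et) * Q = 1 := by
    refine mul_pinv_eq_one Aᵀ _ Adagᵀ Q hBP hQ1 ?_
    rw [hE, norm_transpose_l2]
    exact hEP.trans_lt hcond
  have hQn := norm_pinv_le Aᵀ _ Adagᵀ Q hBP hMQ hQ4
  have hW := wedin Aᵀ _ Adagᵀ Q hBP hMQ hP hQ4
  rw [hE, norm_transpose_l2] at hQn hW
  have hκ1 : 1 ≤ κ := by
    have : Nonempty (Fin z) := ⟨⟨0, hz⟩⟩
    have h1 : ‖(1 : Matrix (Fin z) (Fin z) ℝ)‖ = 1 := norm_one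
    rw [hκ, ← h1, ← hDA]
    exact Matrix.l2_opNorm_mul _ _
  have hη : 0 < 1 - C * κ * εs := by linarith [mul_right_comm C εs κ]
  have hCε : 0 < 1 - C * εs := by nlinarith [mul_pos hC hεs]
  have hQle : ‖Q‖ ≤ ‖Adag‖ / (1 - C * κ * εs) := by
    rw [le_div_iff₀ hη]
    nlinarith [mul_le_mul_of_nonneg_right hEP (norm_nonneg Q)]
  have hPb : ‖Pbar‖ ≤ ‖Q‖ / (1 - C * εs) := by
    rw [le_div_iff₀ hCε]
    have : ‖Pbar‖ ≤ ‖Q‖ + ‖Ft‖ := by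
      rw [eq_sub_of_add_eq hPbar]; exact norm_sub_le _ _
    linarith
  have hs : Adagᵀ - Pbar = (Adagᵀ - Q) + Ft := by rw [← hPbar]; abel
  calc ‖Adagᵀ - Pbar‖ ≤ ‖Adagᵀ - Q‖ + ‖Ft‖ := by rw [hs]; exact norm_add_le _ _
    _ ≤ √2 * (‖Adag‖ * ‖Q‖ * ‖Et‖) + C * εs * (‖Q‖ / (1 - C * εs)) := by
        refine add_le_add hW (hFt.trans ?_)
        gcongr
    _ ≤ √2 * (‖Adag‖ * (‖Adag‖ / (1 - C * κ * εs)) * (C * εs * ‖A‖))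
        + C * εs * ((‖Adag‖ / (1 - C * κ * εs)) / (1 - C * εs)) := by gcongr
    _ = _ := by
        rw [show √2 * κ = √2 * (‖Adag‖ * ‖A‖) by rw [hκ]]
        ring
end
end

section
/- Let ε* > 0, let A ∈ ℝ^{n×z} have full column rank z, let B ∈ ℝ^{z×(q+1)}, and let y₀, …, y_q ∈ ℝⁿ. Suppose f̄(yᵢ) = (1 + εᵢ)f(yᵢ) with |εᵢ| ≤ ε* for each i, and let f_M = max{|f(yᵢ)| : 0 ≤ i ≤ q}, 𝕗 = (f(y₀), …, f(y_q))ᵀ, 𝕗̄ = (f̄(y₀), …, f̄(y_q))ᵀ. Then ‖(Aᵀ)†B𝕗 − (Aᵀ)†B𝕗̄‖ ≤ √(q+1)·f_M·‖A†‖·‖B‖·ε*. -/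
/-!
The error vector `𝕗 − 𝕗̄` has entries `−εᵢ f(yᵢ)`, each at most `f_M ε*` in absolute value, so its
Euclidean norm is at most `√(q+1) · f_M · ε*` (`norm_toE_le`). By linearity the difference of the
two simplex derivatives is `(A†)ᵀ B (𝕗 − 𝕗̄)`, and submultiplicativity (`norm_toE_mulVec_le`)
together with `‖(A†)ᵀ‖ = ‖A†‖` (`spec_transpose`) gives the bound.
-/

open scoped Matrix
noncomputable section

/-- View a plain vector in `ℝⁿ` as an element of Euclidean space (with the ℓ² norm). -/
def toE {n : ℕ} (v : Fin n → ℝ) : EuclideanSpace ℝ (Fin n) :=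
  (WithLp.equiv 2 (Fin n → ℝ)).symm v

open scoped Matrix.Norms.L2Operator in
lemma spec_transpose {m n : ℕ} (M : Matrix (Fin m) (Fin n) ℝ) : spec Mᵀ = spec M := by
  have h := Matrix.l2_opNorm_conjTranspose M
  rw [Matrix.conjTranspose_eq_transpose_of_trivial] at h
  exact h

lemma norm_toE_mulVec_le {m n : ℕ} (M : Matrix (Fin m) (Fin n) ℝ) (v : Fin n → ℝ) :
    ‖toE (M *ᵥ v)‖ ≤ spec M * ‖toE v‖ :=
  (LinearMap.toContinuousLinearMap (Matrix.toEuclideanLin M)).le_opNorm (toE v)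

/-- The comparison `‖v‖₂ ≤ √n ‖v‖_∞`, with `c` any bound on the entries. -/
lemma norm_toE_le {n : ℕ} (v : Fin n → ℝ) {c : ℝ} (hc : 0 ≤ c) (h : ∀ i, |v i| ≤ c) :
    ‖toE v‖ ≤ Real.sqrt n * c := by
  rw [EuclideanSpace.norm_eq, ← Real.sqrt_sq hc, ← Real.sqrt_mul n.cast_nonneg]
  apply Real.sqrt_le_sqrt
  calc ∑ i, ‖toE v i‖ ^ 2 ≤ ∑ _i : Fin n, c ^ 2 :=
        Finset.sum_le_sum fun i _ => pow_le_pow_left₀ (norm_nonneg _) (h i) 2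
    _ = n * c ^ 2 := by simp

/-- **Floating point error in function evaluations, applied to a simplex derivative.**
If `A` has full column rank, `f̄(yᵢ) = (1 + εᵢ)f(yᵢ)` with `|εᵢ| ≤ ε*`, and
`f_M = max |f(yᵢ)|`, then `‖(Aᵀ)†B𝕗 − (Aᵀ)†B𝕗̄‖ ≤ √(q+1)·f_M·‖A†‖·‖B‖·ε*`. -/
theorem function_evaluation_error_simplex_derivative {n z q : ℕ} (εs : ℝ) (hεs : 0 < εs)
    (A : Matrix (Fin n) (Fin z) ℝ) (hrank : A.rank = z)
    (Adag : Matrix (Fin z) (Fin n) ℝ) (hAdag : IsMPInv A Adag)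
    (B : Matrix (Fin z) (Fin (q + 1)) ℝ)
    (y : Fin (q + 1) → EuclideanSpace ℝ (Fin n))
    (f fbar : EuclideanSpace ℝ (Fin n) → ℝ)
    (ε : Fin (q + 1) → ℝ) (hε : ∀ i, |ε i| ≤ εs)
    (hfbar : ∀ i, fbar (y i) = (1 + ε i) * f (y i))
    (fM : ℝ) (hfM : fM = ⨆ i, |f (y i)|) :
    ‖toE (Matrix.mulVec Adagᵀ (Matrix.mulVec B fun i => f (y i)))
        - toE (Matrix.mulVec Adagᵀ (Matrix.mulVec B fun i => fbar (y i)))‖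
      ≤ Real.sqrt (q + 1) * fM * spec Adag * spec B * εs := by
  have hle : ∀ i, |f (y i)| ≤ fM := fun i =>
    hfM ▸ le_ciSup (f := fun i => |f (y i)|) (Set.finite_range _).bddAbove i
  have hfM0 : 0 ≤ fM := (abs_nonneg _).trans (hle 0)
  have hent : ∀ i, |((fun i => f (y i)) - fun i => fbar (y i)) i| ≤ fM * εs := by
    intro i
    have : ((fun i => f (y i)) - fun i => fbar (y i)) i = -(f (y i) * ε i) := by
      simp only [Pi.sub_apply, hfbar]
      ring
    rw [this, abs_neg, abs_mul]
    exact mul_le_mul (hle i) (hε i) (abs_nonneg _) hfM0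
  have herr := norm_toE_le _ (mul_nonneg hfM0 hεs.le) hent
  push_cast at herr
  have hA : 0 ≤ spec Adag := norm_nonneg _
  have hB : 0 ≤ spec B := norm_nonneg _
  calc _ = ‖toE (Adagᵀ *ᵥ (B *ᵥ ((fun i => f (y i)) - fun i => fbar (y i))))‖ := by
        rw [Matrix.mulVec_sub, Matrix.mulVec_sub]
        rfl
    _ ≤ spec Adag * (spec B * (Real.sqrt (q + 1) * (fM * εs))) := by
        refine (norm_toE_mulVec_le _ _).trans ?_
        rw [spec_transpose]
        gcongr
        refine (norm_toE_mulVec_le _ _).trans ?_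
        gcongr
    _ = _ := by ring
end
end

section
/- Let p ≥ 1, let k₁, …, k_p > 0, let 𝕜 = (k₁², …, k_p²)ᵀ ∈ ℝᵖ, let D = diag(k₁², …, k_p²), and let B = [𝟙−𝕜 D −I_p] ∈ ℝ^{p×(2p+1)} (first column 𝟙−𝕜, then the columns of D, then the columns of −I_p). Then the spectral norm of B satisfies ‖B‖ ≤ √( Σᵢ₌₁ᵖ (1 − kᵢ²)² + maxᵢ (kᵢ⁴ + 1) ). -/
/-!
Split `x ∈ ℝ^{2p+1}` as `(x₀, u, v)` and put `a = 𝟙 − 𝕜`, so that `B x = x₀ a + w` with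
`wᵢ = kᵢ² uᵢ − vᵢ`. Cauchy–Schwarz in `ℝ²` gives `wᵢ² ≤ (kᵢ⁴ + 1)(uᵢ² + vᵢ²)`, hence
`‖w‖² ≤ M (‖u‖² + ‖v‖²)` with `M = maxᵢ (kᵢ⁴ + 1)`. Bounding the cross term `2 x₀ ⟨a, w⟩` by
Cauchy–Schwarz and Young's inequality with weight `M` (`sum_sq_add_le`) yields
`‖B x‖² ≤ (‖a‖² + M) ‖x‖²`.
-/

noncomputable section

/-- Splitting of the indices of `B` into its blocks `𝟙 − 𝕜`, `D` and `−I_p`. -/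
lemma sum_blocks (p : ℕ) (f : Fin (2 * p + 1) → ℝ) :
    ∑ j, f j = f 0 + ∑ i : Fin p, f ⟨i + 1, by omega⟩
      + ∑ i : Fin p, f ⟨p + i + 1, by omega⟩ := by
  have key : ∀ (n : ℕ) (h : n = p + p) (g : Fin n → ℝ),
      ∑ j, g j = ∑ i : Fin p, g ⟨i, by omega⟩ + ∑ i : Fin p, g ⟨p + i, by omega⟩ := by
    intro n h g
    subst h
    rw [Fin.sum_univ_add]
    rfl
  rw [Fin.sum_univ_succ, key (2 * p) (by omega), add_assoc]
  rfl

/-- `‖t a + w‖² ≤ (‖a‖² + M)(t² + N)` whenever `‖w‖² ≤ M N`. -/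
lemma sum_sq_add_le {p : ℕ} (a w : Fin p → ℝ) (t M N : ℝ) (hM : 0 < M)
    (hw : ∑ i, w i ^ 2 ≤ M * N) :
    ∑ i, (a i * t + w i) ^ 2 ≤ (∑ i, a i ^ 2 + M) * (t ^ 2 + N) := by
  have hexp : ∑ i, (a i * t + w i) ^ 2
      = (∑ i, a i ^ 2) * t ^ 2 + 2 * t * (∑ i, a i * w i) + ∑ i, w i ^ 2 := by
    simp only [Finset.sum_mul, Finset.mul_sum, ← Finset.sum_add_distrib]
    exact Finset.sum_congr rfl fun i _ => by ring
  have hcs := Finset.sum_mul_sq_le_sq_mul_sq Finset.univ a w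
  have hA : 0 ≤ ∑ i, a i ^ 2 := Finset.sum_nonneg fun i _ => sq_nonneg _
  rw [hexp]
  generalize ∑ i, a i ^ 2 = A at *
  generalize ∑ i, w i ^ 2 = W at *
  generalize ∑ i, a i * w i = S at *
  have hS : S ^ 2 ≤ M * (A * N) := by nlinarith [mul_le_mul_of_nonneg_left hw hA]
  -- Young's inequality, multiplied through by `M`: it is `(M t − S)² ≥ 0`.
  have hcross : 2 * t * S ≤ M * t ^ 2 + A * N := by
    refine le_of_mul_le_mul_left ?_ hM
    nlinarith [sq_nonneg (M * t - S)]
  nlinarith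

/-- **Spectral norm bound for the GACSG coefficient matrix `B = [𝟙−𝕜 D −I_p]`.**
With `𝕜 = (k₁², …, k_p²)ᵀ` and `D = diag(k₁², …, k_p²)`,
`‖B‖ ≤ √(Σᵢ (1 − kᵢ²)² + maxᵢ (kᵢ⁴ + 1))`. -/
theorem spec_norm_gacsg_B {p : ℕ} (hp : 1 ≤ p)
    (k : Fin p → ℝ) (hk : ∀ i, 0 < k i)
    (B : Matrix (Fin p) (Fin (2 * p + 1)) ℝ)
    (hB : B = Matrix.of fun (i : Fin p) (j : Fin (2 * p + 1)) =>
      if (j : ℕ) = 0 then 1 - (k i) ^ 2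
      else if (j : ℕ) = (i : ℕ) + 1 then (k i) ^ 2
      else if (j : ℕ) = p + (i : ℕ) + 1 then -1 else 0) :
    spec B ≤ Real.sqrt ((∑ i, (1 - (k i) ^ 2) ^ 2) + ⨆ i, ((k i) ^ 4 + 1)) := by
  have hle : ∀ i, k i ^ 4 + 1 ≤ ⨆ i, ((k i) ^ 4 + 1) := fun i =>
    le_ciSup (f := fun i => k i ^ 4 + 1) (Set.finite_range _).bddAbove i
  have hM : 0 < ⨆ i, ((k i) ^ 4 + 1) :=
    lt_of_lt_of_le (by positivity) (hle ⟨0, hp⟩)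
  generalize (⨆ i, ((k i) ^ 4 + 1)) = M at *
  refine ContinuousLinearMap.opNorm_le_bound _ (Real.sqrt_nonneg _) fun x => ?_
  have hrow : ∀ i, (Matrix.toEuclideanLin B x) i = (1 - k i ^ 2) * x 0
      + (k i ^ 2 * x ⟨i + 1, by omega⟩ - x ⟨p + i + 1, by omega⟩) := by
    intro i
    have h1 : (Matrix.toEuclideanLin B x) i = ∑ j, B i j * x j := rfl
    have hD : ∀ l : Fin p, B i ⟨l + 1, by omega⟩ = if l = i then k i ^ 2 else 0 := by
      intro l
      simp only [hB, Matrix.of_apply, Fin.ext_iff]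
      split_ifs <;> first | rfl | contradiction | omega
    have hI : ∀ l : Fin p, B i ⟨p + l + 1, by omega⟩ = if l = i then -1 else 0 := by
      intro l
      simp only [hB, Matrix.of_apply, Fin.ext_iff]
      split_ifs <;> first | rfl | contradiction | omega
    have h0 : B i 0 = 1 - k i ^ 2 := by simp [hB]
    rw [h1, sum_blocks]
    simp only [h0, hD, hI, ite_mul, zero_mul, Finset.sum_ite_eq', Finset.mem_univ, if_true]
    ring
  rw [LinearMap.coe_toContinuousLinearMap', EuclideanSpace.norm_eq, EuclideanSpace.norm_eq,
    ← Real.sqrt_mul (by positivity)]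
  refine Real.sqrt_le_sqrt ?_
  simp only [Real.norm_eq_abs, sq_abs, hrow]
  rw [sum_blocks, add_assoc]
  refine sum_sq_add_le _ _ _ _ _ hM ?_
  rw [← Finset.sum_add_distrib, Finset.mul_sum]
  refine Finset.sum_le_sum fun i _ => ?_
  generalize x ⟨i + 1, _⟩ = u
  generalize x ⟨p + i + 1, _⟩ = v
  calc (k i ^ 2 * u - v) ^ 2 ≤ (k i ^ 4 + 1) * (u ^ 2 + v ^ 2) := by
        nlinarith [sq_nonneg (k i ^ 2 * v + u)]
    _ ≤ M * (u ^ 2 + v ^ 2) := mul_le_mul_of_nonneg_right (hle i) (by positivity)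
end
end
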